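/- The mediation formula identifies the L-conditional randomized interventional analogue of the natural direct effect under within-world assumptions only: under consistency, positivity, and the within-world exchangeability assumptions, one has E[Y^{1,G_{0|L}}] − E[Y^{0,G_{0|L}}] = Ψ(P), where E[Y^{a,G_{a*|L}}] := Σ_l P(L=l) Σ_m P(M^{a*}=m | L=l) · E[Y^{a,m} | L=l] and Ψ(P) is the mediation formula. -/

import Mathlib

open Classical

noncomputable section

/-- Probability of the event `S` under the probability mass function `P`
on a finite sample space. -/
def pr {Ω : Type} [Fintype Ω] (P : Ω → ℝ) (S : Ω → Prop) : ℝ :=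
  ∑ ω, if S ω then P ω else 0

/-- Conditional probability of `S` given `T`, with the convention that it is `0`
when the conditioning event is null (in Lean, `x / 0 = 0`). -/
def cpr {Ω : Type} [Fintype Ω] (P : Ω → ℝ) (S T : Ω → Prop) : ℝ :=
  pr P (fun ω => S ω ∧ T ω) / pr P T

/-- Expectation of `X` under `P`. -/
def expec {Ω : Type} [Fintype Ω] (P : Ω → ℝ) (X : Ω → ℝ) : ℝ :=
  ∑ ω, X ω * P ω

/-- Conditional expectation of `X` given the event `T`, with the convention that
it is `0` when the conditioning event is null. -/
def cexp {Ω : Type} [Fintype Ω] (P : Ω → ℝ) (X : Ω → ℝ) (T : Ω → Prop) : ℝ :=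
  (∑ ω, if T ω then X ω * P ω else 0) / pr P T

/-- The mediation formula
`Ψ(P) = Σ_m Σ_l ( E[Y|M=m,A=1,L=l] − E[Y|M=m,A=0,L=l] ) · P(M=m|A=0,L=l) · P(L=l)`. -/
def medForm {Ω Lt Mt : Type} [Fintype Ω] [Fintype Lt] [Fintype Mt]
    (P : Ω → ℝ) (Lv : Ω → Lt) (A : Ω → Fin 2) (M : Ω → Mt) (Y : Ω → ℝ) : ℝ :=
  ∑ m, ∑ l,
    (cexp P Y (fun ω => M ω = m ∧ A ω = 1 ∧ Lv ω = l)
      - cexp P Y (fun ω => M ω = m ∧ A ω = 0 ∧ Lv ω = l))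
    * cpr P (fun ω => M ω = m) (fun ω => A ω = 0 ∧ Lv ω = l)
    * pr P (fun ω => Lv ω = l)

/-- `E[Y^{a,G_{a*|L}}] = Σ_l P(L=l) Σ_m P(M^{a*}=m | L=l) · E[Y^{a,m} | L=l]`. -/
def gMeanL {Ω Lt Mt : Type} [Fintype Ω] [Fintype Lt] [Fintype Mt]
    (P : Ω → ℝ) (Lv : Ω → Lt) (Mc : Fin 2 → Ω → Mt) (Yc : Fin 2 → Mt → Ω → ℝ)
    (a astar : Fin 2) : ℝ :=
  ∑ l, pr P (fun ω => Lv ω = l) *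
    (∑ m, cpr P (fun ω => Mc astar ω = m) (fun ω => Lv ω = l)
      * cexp P (Yc a m) (fun ω => Lv ω = l))

/-- The integral of `X` over the event `T`. -/
def integ {Ω : Type} [Fintype Ω] (P : Ω → ℝ) (X : Ω → ℝ) (T : Ω → Prop) : ℝ :=
  ∑ ω, if T ω then X ω * P ω else 0

lemma fiber_sum {Ω β : Type} [Fintype Ω] (P : Ω → ℝ) (W : Ω → β) (f : β → ℝ) (T : Ω → Prop) :
    integ P (fun ω => f (W ω)) T
      = ∑ b ∈ Finset.univ.image W, f b * pr P (fun ω => W ω = b ∧ T ω) := by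
  unfold pr integ
  simp_rw [Finset.mul_sum]
  rw [Finset.sum_comm]
  refine Finset.sum_congr rfl fun ω _ => ?_
  rw [Finset.sum_eq_single (W ω)]
  · by_cases h : T ω <;> simp [h]
  · intro b _ hb
    simp [Ne.symm hb]
  · intro h
    exact absurd (Finset.mem_image_of_mem W (Finset.mem_univ ω)) h

lemma fiber_transfer {Ω β : Type} [Fintype Ω] (P : Ω → ℝ) (W : Ω → β) (f : β → ℝ)
    (T U : Ω → Prop) (c d : ℝ)
    (h : ∀ b, pr P (fun ω => W ω = b ∧ T ω) * c = pr P (fun ω => W ω = b ∧ U ω) * d) :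
    integ P (fun ω => f (W ω)) T * c
      = integ P (fun ω => f (W ω)) U * d := by
  rw [fiber_sum, fiber_sum, Finset.sum_mul, Finset.sum_mul]
  refine Finset.sum_congr rfl fun b _ => ?_
  rw [mul_assoc, h, mul_assoc]

lemma pr_congr {Ω : Type} [Fintype Ω] (P : Ω → ℝ) {S T : Ω → Prop} (h : ∀ ω, S ω ↔ T ω) :
    pr P S = pr P T := by
  have : S = T := funext fun ω => propext (h ω)
  rw [this]

lemma pr_nonneg {Ω : Type} [Fintype Ω] (P : Ω → ℝ) (hP0 : ∀ ω, 0 ≤ P ω) (S : Ω → Prop) :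
    0 ≤ pr P S := by
  unfold pr
  refine Finset.sum_nonneg fun ω _ => ?_
  split_ifs
  · exact hP0 ω
  · exact le_rfl

/-- The mediation formula identifies the `L`-conditional randomized
interventional analogue of the natural direct effect under within-world assumptions
only: under consistency, positivity, and the within-world exchangeability
assumptions, `E[Y^{1,G_{0|L}}] − E[Y^{0,G_{0|L}}] = Ψ(P)`. -/
theorem mediation_formula_identifies_rdeL
    (Ω Lt Mt : Type) [Fintype Ω] [Fintype Lt] [Fintype Mt]
    (P : Ω → ℝ) (hP0 : ∀ ω, 0 ≤ P ω) (hP1 : (∑ ω, P ω) = 1)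
    (Lv : Ω → Lt) (A : Ω → Fin 2) (M : Ω → Mt) (Y : Ω → ℝ)
    (Mc : Fin 2 → Ω → Mt) (Yc : Fin 2 → Mt → Ω → ℝ)
    -- consistency
    (hconsM : ∀ (a : Fin 2) (ω : Ω), A ω = a → Mc a ω = M ω)
    (hconsY : ∀ (a : Fin 2) (m : Mt) (ω : Ω), A ω = a → M ω = m → Yc a m ω = Y ω)
    -- positivity
    (hpos : ∀ l : Lt, 0 < pr P (fun ω => Lv ω = l) → ∀ (a : Fin 2) (m : Mt),
      0 < cpr P (fun ω => A ω = a) (fun ω => Lv ω = l) ∧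
      0 < cpr P (fun ω => M ω = m) (fun ω => A ω = a ∧ Lv ω = l))
    -- within-world exchangeability, part 1:
    -- for each a, (M^a, (Y^{a,m})_m) ⟂ A given L
    (hexch1 : ∀ (a : Fin 2) (mv : Mt) (yv : Mt → ℝ) (l : Lt) (a' : Fin 2),
      cpr P (fun ω => Mc a ω = mv ∧ (∀ m, Yc a m ω = yv m) ∧ A ω = a')
          (fun ω => Lv ω = l)
        = cpr P (fun ω => Mc a ω = mv ∧ (∀ m, Yc a m ω = yv m)) (fun ω => Lv ω = l)
          * cpr P (fun ω => A ω = a') (fun ω => Lv ω = l))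
    -- within-world exchangeability, part 2:
    -- Y^{a,m} ⟂ M^a given L on the event {A = a}
    (hexch2 : ∀ (a : Fin 2) (m : Mt) (y : ℝ) (mv : Mt) (l : Lt),
      cpr P (fun ω => Yc a m ω = y ∧ Mc a ω = mv) (fun ω => Lv ω = l ∧ A ω = a)
        = cpr P (fun ω => Yc a m ω = y) (fun ω => Lv ω = l ∧ A ω = a)
            * cpr P (fun ω => Mc a ω = mv) (fun ω => Lv ω = l ∧ A ω = a)) :
    gMeanL P Lv Mc Yc 1 0 - gMeanL P Lv Mc Yc 0 0 = medForm P Lv A M Y := by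
  have key : ∀ l : Lt, 0 < pr P (fun ω => Lv ω = l) → ∀ (a : Fin 2) (m : Mt),
      cpr P (fun ω => Mc a ω = m) (fun ω => Lv ω = l)
        = cpr P (fun ω => M ω = m) (fun ω => A ω = a ∧ Lv ω = l) ∧
      cexp P (Yc a m) (fun ω => Lv ω = l)
        = cexp P Y (fun ω => M ω = m ∧ A ω = a ∧ Lv ω = l) := by
    intro l hl a m
    obtain ⟨h1, h2⟩ := hpos l hl a m
    have hal : 0 < pr P (fun ω => A ω = a ∧ Lv ω = l) := by
      unfold cpr at h1
      exact (div_pos_iff_of_pos_right hl).1 h1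
    have hmal : 0 < pr P (fun ω => M ω = m ∧ A ω = a ∧ Lv ω = l) := by
      unfold cpr at h2
      exact (div_pos_iff_of_pos_right hal).1 h2
    have tr : ∀ f : Mt × (Mt → ℝ) → ℝ,
        integ P (fun ω => f (Mc a ω, fun m => Yc a m ω)) (fun ω => A ω = a ∧ Lv ω = l)
            * pr P (fun ω => Lv ω = l)
          = integ P (fun ω => f (Mc a ω, fun m => Yc a m ω)) (fun ω => Lv ω = l)
            * pr P (fun ω => A ω = a ∧ Lv ω = l) := by
      intro f
      refine fiber_transfer P (fun ω => (Mc a ω, fun m => Yc a m ω)) f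
        (fun ω => A ω = a ∧ Lv ω = l) (fun ω => Lv ω = l) _ _ ?_
      rintro ⟨mv, yv⟩
      have h := hexch1 a mv yv l a
      unfold cpr at h
      have e1 : pr P (fun ω => (Mc a ω, fun m => Yc a m ω) = (mv, yv) ∧ A ω = a ∧ Lv ω = l)
          = pr P (fun ω => (Mc a ω = mv ∧ (∀ m, Yc a m ω = yv m) ∧ A ω = a) ∧ Lv ω = l) :=
        pr_congr P fun ω => by simp only [Prod.mk.injEq, funext_iff]; tauto
      have e2 : pr P (fun ω => (Mc a ω, fun m => Yc a m ω) = (mv, yv) ∧ Lv ω = l)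
          = pr P (fun ω => (Mc a ω = mv ∧ (∀ m, Yc a m ω = yv m)) ∧ Lv ω = l) :=
        pr_congr P fun ω => by simp only [Prod.mk.injEq, funext_iff]
      rw [e1, e2]
      have hl' := hl.ne'
      field_simp at h
      exact h
    have hM := tr (fun b => if b.1 = m then 1 else 0)
    have hY := tr (fun b => b.2 m)
    have hM1 : integ P (fun ω => if Mc a ω = m then (1:ℝ) else 0) (fun ω => A ω = a ∧ Lv ω = l)
        = pr P (fun ω => M ω = m ∧ A ω = a ∧ Lv ω = l) := by
      unfold pr integ
      refine Finset.sum_congr rfl fun ω _ => ?_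
      by_cases hA : A ω = a
      · simp only [hconsM a ω hA]
        by_cases h3 : M ω = m <;> simp [h3]
      · simp [hA]
    have hM2 : integ P (fun ω => if Mc a ω = m then (1:ℝ) else 0) (fun ω => Lv ω = l)
        = pr P (fun ω => Mc a ω = m ∧ Lv ω = l) := by
      unfold pr integ
      refine Finset.sum_congr rfl fun ω _ => ?_
      by_cases h3 : Mc a ω = m <;> simp [h3]
    have h22 := fiber_transfer P (Yc a m) (fun y => y)
      (fun ω => M ω = m ∧ A ω = a ∧ Lv ω = l) (fun ω => A ω = a ∧ Lv ω = l)
      (pr P (fun ω => A ω = a ∧ Lv ω = l))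
      (pr P (fun ω => M ω = m ∧ A ω = a ∧ Lv ω = l)) (by
        intro y
        have h := hexch2 a m y m l
        unfold cpr at h
        have e1 : pr P (fun ω => (Yc a m ω = y ∧ Mc a ω = m) ∧ Lv ω = l ∧ A ω = a)
            = pr P (fun ω => Yc a m ω = y ∧ M ω = m ∧ A ω = a ∧ Lv ω = l) :=
          pr_congr P fun ω => by
            have := hconsM a ω
            grind
        have e2 : pr P (fun ω => Yc a m ω = y ∧ Lv ω = l ∧ A ω = a)
            = pr P (fun ω => Yc a m ω = y ∧ A ω = a ∧ Lv ω = l) :=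
          pr_congr P fun ω => by tauto
        have e3 : pr P (fun ω => Mc a ω = m ∧ Lv ω = l ∧ A ω = a)
            = pr P (fun ω => M ω = m ∧ A ω = a ∧ Lv ω = l) :=
          pr_congr P fun ω => by
            have := hconsM a ω
            grind
        have e4 : pr P (fun ω => Lv ω = l ∧ A ω = a) = pr P (fun ω => A ω = a ∧ Lv ω = l) :=
          pr_congr P fun ω => by tauto
        rw [e1, e2, e3, e4] at h
        have hal' := hal.ne'
        field_simp at h
        exact h)
    have hYY : integ P (Yc a m) (fun ω => M ω = m ∧ A ω = a ∧ Lv ω = l)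
        = integ P Y (fun ω => M ω = m ∧ A ω = a ∧ Lv ω = l) := by
      unfold integ
      refine Finset.sum_congr rfl fun ω _ => ?_
      split_ifs with h
      · rw [hconsY a m ω h.2.1 h.1]
      · rfl
    constructor
    · unfold cpr
      rw [div_eq_div_iff hl.ne' hal.ne', ← hM1, ← hM2]
      exact hM.symm
    · change integ P (Yc a m) (fun ω => Lv ω = l) / _
        = integ P Y (fun ω => M ω = m ∧ A ω = a ∧ Lv ω = l) / _
      rw [← hYY, div_eq_div_iff hl.ne' hmal.ne']
      refine mul_right_cancel₀ hal.ne' ?_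
      linear_combination
        (-pr P (fun ω => M ω = m ∧ A ω = a ∧ Lv ω = l)) * hY
          - pr P (fun ω => Lv ω = l) * h22
  unfold gMeanL medForm
  rw [Finset.sum_comm, ← Finset.sum_sub_distrib]
  refine Finset.sum_congr rfl fun l _ => ?_
  rcases (pr_nonneg P hP0 (fun ω => Lv ω = l)).eq_or_lt with h0 | hl
  · rw [← h0]
    simp
  · rw [← mul_sub, ← Finset.sum_sub_distrib, Finset.mul_sum]
    refine Finset.sum_congr rfl fun m _ => ?_
    rw [(key l hl 0 m).1, (key l hl 0 m).2, (key l hl 1 m).2]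
    ring
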